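/- For the BB(1̄, 1̄, 3, 3) code, with f = 1 + x + x^{-1} y³ and g = 1 + y + y^{-1} x³ in R, the topological index is Q = dim_{F₂} R ⧸ (f, g) = 8; hence this code supports 2^{16} anyon types and k_max = 16. -/

import Mathlib

noncomputable section

/-- The Laurent polynomial ring `F₂[x^±, y^±]` as a group algebra. -/
abbrev LaurentR : Type := AddMonoidAlgebra (ZMod 2) (ℤ × ℤ)

/-- The monomial `x^i y^j`. -/
def mono (i j : ℤ) : LaurentR := AddMonoidAlgebra.single (i, j) 1

open scoped Matrix

/-- Multiplication by `x` on `R ⧸ (f, g)` in the basis `1, y, y², x, xy, xy², x², x²y`. -/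
def mulX : Matrix (Fin 8) (Fin 8) (ZMod 2) :=
  !![0, 0, 0, 0, 0, 1, 0, 0;
     0, 0, 0, 0, 0, 1, 1, 0;
     0, 0, 0, 0, 0, 0, 1, 1;
     1, 0, 0, 0, 0, 1, 0, 1;
     0, 1, 0, 0, 0, 1, 0, 0;
     0, 0, 1, 0, 0, 0, 0, 0;
     0, 0, 0, 1, 0, 0, 0, 1;
     0, 0, 0, 0, 1, 0, 0, 0]

/-- The inverse of `mulX`. -/
def mulXInv : Matrix (Fin 8) (Fin 8) (ZMod 2) :=
  !![0, 1, 1, 1, 0, 0, 0, 0;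
     1, 0, 0, 0, 1, 0, 0, 0;
     0, 0, 0, 0, 0, 1, 0, 0;
     1, 1, 1, 0, 0, 0, 1, 0;
     0, 0, 0, 0, 0, 0, 0, 1;
     1, 0, 0, 0, 0, 0, 0, 0;
     1, 1, 0, 0, 0, 0, 0, 0;
     1, 1, 1, 0, 0, 0, 0, 0]

/-- Multiplication by `y` on `R ⧸ (f, g)` in the basis `1, y, y², x, xy, xy², x², x²y`. -/
def mulY : Matrix (Fin 8) (Fin 8) (ZMod 2) :=
  !![0, 0, 0, 0, 0, 0, 0, 1;
     1, 0, 0, 0, 0, 1, 0, 1;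
     0, 1, 0, 0, 0, 1, 0, 0;
     0, 0, 1, 0, 0, 0, 0, 1;
     0, 0, 0, 1, 0, 0, 0, 1;
     0, 0, 0, 0, 1, 0, 0, 0;
     0, 0, 1, 0, 0, 1, 0, 0;
     0, 0, 0, 0, 0, 0, 1, 0]

/-- The inverse of `mulY`. -/
def mulYInv : Matrix (Fin 8) (Fin 8) (ZMod 2) :=
  !![0, 1, 0, 1, 0, 0, 1, 0;
     1, 0, 1, 1, 0, 0, 1, 0;
     1, 0, 0, 1, 0, 0, 0, 0;
     1, 0, 0, 0, 1, 0, 0, 0;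
     0, 0, 0, 0, 0, 1, 0, 0;
     1, 0, 0, 1, 0, 0, 1, 0;
     0, 0, 0, 0, 0, 0, 0, 1;
     1, 0, 0, 0, 0, 0, 0, 0]

theorem mulX_mul_mulXInv : mulX * mulXInv = 1 := by decide +kernel

theorem mulY_mul_mulYInv : mulY * mulYInv = 1 := by decide +kernel

/-- `mulX` as a unit. -/
def unitX : (Matrix (Fin 8) (Fin 8) (ZMod 2))ˣ :=
  ⟨mulX, mulXInv, mulX_mul_mulXInv, by decide +kernel⟩

/-- `mulY` as a unit. -/
def unitY : (Matrix (Fin 8) (Fin 8) (ZMod 2))ˣ :=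
  ⟨mulY, mulYInv, mulY_mul_mulYInv, by decide +kernel⟩

theorem commute_unitX_unitY : Commute unitX unitY :=
  Units.ext (by change mulX * mulY = mulY * mulX; decide +kernel)

/-- The matrix representation of `R` sending `x` to `mulX` and `y` to `mulY`. -/
def matrixRep : LaurentR →ₐ[ZMod 2] Matrix (Fin 8) (Fin 8) (ZMod 2) :=
  AddMonoidAlgebra.lift (ZMod 2) _ (ℤ × ℤ)
    { toFun := fun p => ((unitX ^ p.toAdd.1 * unitY ^ p.toAdd.2 : _ˣ) : Matrix _ _ _)
      map_one' := by simp
      map_mul' := fun p q => by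
        have h := (commute_unitX_unitY.zpow_zpow q.toAdd.1 p.toAdd.2).eq
        rw [← Units.val_mul, toAdd_mul, Prod.fst_add, Prod.snd_add, zpow_add, zpow_add,
          mul_assoc, ← mul_assoc _ (unitY ^ p.toAdd.2), h]
        simp only [mul_assoc] }

theorem matrixRep_mono (i j : ℤ) :
    matrixRep (mono i j) = ((unitX ^ i * unitY ^ j : _ˣ) : Matrix _ _ _) := by
  simp [matrixRep, mono]

theorem matrixRep_mono_one_zero : matrixRep (mono 1 0) = mulX := by
  rw [matrixRep_mono, zpow_one, zpow_zero, mul_one]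
  rfl

theorem matrixRep_mono_zero_one : matrixRep (mono 0 1) = mulY := by
  rw [matrixRep_mono, zpow_one, zpow_zero, one_mul]
  rfl

theorem mono_mul_mono (i j k l : ℤ) : mono i j * mono k l = mono (i + k) (j + l) := by
  simp [mono, AddMonoidAlgebra.single_mul_single]

theorem mono_pow (i j : ℤ) (n : ℕ) : mono i j ^ n = mono (n * i) (n * j) := by
  simp [mono, AddMonoidAlgebra.single_pow]

/-- The ideal `(f, g)`. -/
abbrev bbIdeal : Ideal LaurentR :=
  Ideal.span {1 + mono 1 0 + mono (-1) 3, 1 + mono 0 1 + mono 3 (-1)}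

theorem matrixRep_eq_zero_of_mem {r : LaurentR} (hr : r ∈ bbIdeal) : matrixRep r = 0 := by
  suffices bbIdeal ≤ RingHom.ker matrixRep from this hr
  rw [Ideal.span_le]
  have hf : 1 + mulX + mulXInv * mulY ^ 3 = 0 := by decide +kernel
  have hg : 1 + mulY + mulX ^ 3 * mulYInv = 0 := by decide +kernel
  rintro _ (rfl | rfl)
  · rw [SetLike.mem_coe, RingHom.mem_ker, map_add, map_add, map_one, matrixRep_mono_one_zero,
      matrixRep_mono, zpow_neg_one, zpow_ofNat, Units.val_mul, Units.val_pow_eq_pow_val]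
    exact hf
  · rw [SetLike.mem_coe, RingHom.mem_ker, map_add, map_add, map_one, matrixRep_mono_zero_one,
      matrixRep_mono, zpow_neg_one, zpow_ofNat, Units.val_mul, Units.val_pow_eq_pow_val]
    exact hg

/-- The action of `R ⧸ (f, g)` on the first standard basis vector. -/
def coordMap : (LaurentR ⧸ bbIdeal) →ₗ[ZMod 2] (Fin 8 → ZMod 2) :=
  ((Matrix.mulVecBilin (ZMod 2) (ZMod 2)).flip (Pi.single 0 1)) ∘ₗ
    (Ideal.Quotient.liftₐ bbIdeal matrixRep fun _ => matrixRep_eq_zero_of_mem).toLinearMap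

/-- The family `1, y, y², x, xy, xy², x², x²y`. -/
def monomialFamily {A : Type*} [CommRing A] (x y : A) : Fin 8 → A :=
  ![1, y, y ^ 2, x, x * y, x * y ^ 2, x ^ 2, x ^ 2 * y]

theorem map_monomialFamily {A B : Type*} [CommRing A] [CommRing B] (φ : A →+* B) (x y : A)
    (k : Fin 8) : φ (monomialFamily x y k) = monomialFamily (φ x) (φ y) k := by
  fin_cases k <;> simp [monomialFamily]

/-- Solutions of `x³ = y + y²`, `y³ = x + x²` with `x` invertible satisfy `x²y² = 1 + x + y + xy`. -/
theorem sq_mul_sq_eq {A : Type*} [CommRing A] {x y : A} (hu : IsUnit x)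
    (hx : x ^ 3 = y + y ^ 2) (hy : y ^ 3 = x + x ^ 2) :
    x ^ 2 * y ^ 2 = 1 + x + y + x * y := by
  refine hu.mul_left_cancel ?_
  linear_combination y ^ 2 * hx + (1 + y) * hy

section Spanning

variable {A : Type*} [CommRing A] [Algebra (ZMod 2) A]

theorem mul_family_of_mul_eq_one {a b : A} {v : Fin 8 → A}
    {M N : Matrix (Fin 8) (Fin 8) (ZMod 2)} (h : ∀ k, a * v k = ∑ l, M l k • v l)
    (hab : a * b = 1) (hMN : M * N = 1) (k : Fin 8) : b * v k = ∑ l, N l k • v l := by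
  have key : a * ∑ l, N l k • v l = v k := by
    simp only [Finset.mul_sum, mul_smul_comm, h, Finset.smul_sum, smul_smul]
    rw [Finset.sum_comm]
    simp only [← Finset.sum_smul]
    have hk (m : Fin 8) : ∑ l, N l k * M m l = (1 : Matrix (Fin 8) (Fin 8) (ZMod 2)) m k := by
      rw [← hMN, Matrix.mul_apply]
      exact Finset.sum_congr rfl fun _ _ => mul_comm _ _
    simp [hk, Matrix.one_apply]
  rw [← key, ← mul_assoc, mul_comm b, hab, one_mul]

/-- The elements that multiply a subspace into itself. -/
def multiplierSubalgebra (S : Submodule (ZMod 2) A) : Subalgebra (ZMod 2) A where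
  carrier := {a | ∀ s ∈ S, a * s ∈ S}
  mul_mem' ha hb s hs := by rw [mul_assoc]; exact ha _ (hb _ hs)
  add_mem' ha hb s hs := by rw [add_mul]; exact S.add_mem (ha _ hs) (hb _ hs)
  algebraMap_mem' r s hs := by rw [← Algebra.smul_def]; exact S.smul_mem _ hs

theorem mem_multiplierSubalgebra {a : A} {v : Fin 8 → A}
    {M : Matrix (Fin 8) (Fin 8) (ZMod 2)} (h : ∀ k, a * v k = ∑ l, M l k • v l) :
    a ∈ multiplierSubalgebra (Submodule.span (ZMod 2) (Set.range v)) := by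
  intro s hs
  induction hs using Submodule.span_induction with
  | mem s hs =>
    obtain ⟨k, rfl⟩ := hs
    rw [h]
    exact Submodule.sum_mem _ fun l _ => Submodule.smul_mem _ _ (Submodule.subset_span ⟨l, rfl⟩)
  | zero => simp
  | add s t _ _ hs ht => rw [mul_add]; exact Submodule.add_mem _ hs ht
  | smul c s _ hs => rw [mul_smul_comm]; exact Submodule.smul_mem _ _ hs

variable [CharP A 2] {x y : A}

theorem mul_monomialFamily_left (hxy : x ^ 2 * y ^ 2 = 1 + x + y + x * y)
    (hx : x ^ 3 = y + y ^ 2) (hy : y ^ 3 = x + x ^ 2) (k : Fin 8) :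
    x * monomialFamily x y k = ∑ l, mulX l k • monomialFamily x y l := by
  fin_cases k <;> simp [monomialFamily, mulX, Fin.sum_univ_succ] <;> grind

theorem mul_monomialFamily_right (hxy : x ^ 2 * y ^ 2 = 1 + x + y + x * y)
    (hx : x ^ 3 = y + y ^ 2) (hy : y ^ 3 = x + x ^ 2) (k : Fin 8) :
    y * monomialFamily x y k = ∑ l, mulY l k • monomialFamily x y l := by
  fin_cases k <;> simp [monomialFamily, mulY, Fin.sum_univ_succ] <;> grind

end Spanning

theorem subalgebra_eq_top_of_mono_mem {T : Subalgebra (ZMod 2) LaurentR}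
    (hx : mono 1 0 ∈ T) (hx' : mono (-1) 0 ∈ T) (hy : mono 0 1 ∈ T) (hy' : mono 0 (-1) ∈ T) :
    T = ⊤ := by
  have hi (i : ℤ) : mono i 0 ∈ T := by
    obtain ⟨n, rfl | rfl⟩ := i.eq_nat_or_neg
    · simpa [mono_pow] using T.pow_mem hx n
    · simpa [mono_pow] using T.pow_mem hx' n
  have hj (j : ℤ) : mono 0 j ∈ T := by
    obtain ⟨n, rfl | rfl⟩ := j.eq_nat_or_neg
    · simpa [mono_pow] using T.pow_mem hy n
    · simpa [mono_pow] using T.pow_mem hy' n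
  refine eq_top_iff.2 fun r _ => ?_
  induction r using AddMonoidAlgebra.induction_on with
  | of p =>
    have := T.mul_mem (hi p.1) (hj p.2)
    rw [mono_mul_mono, add_zero, zero_add] at this
    exact this
  | add a b ha hb => exact T.add_mem (ha trivial) (hb trivial)
  | smul c a ha => exact T.smul_mem (ha trivial) c

/-- The monomials `1, y, y², x, xy, xy², x², x²y` in `R ⧸ (f, g)`. -/
def quotientFamily : Fin 8 → LaurentR ⧸ bbIdeal :=
  monomialFamily (Ideal.Quotient.mk bbIdeal (mono 1 0)) (Ideal.Quotient.mk bbIdeal (mono 0 1))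

theorem coordMap_quotientFamily (k : Fin 8) :
    coordMap (quotientFamily k) = Pi.basisFun (ZMod 2) (Fin 8) k := by
  rw [quotientFamily, ← map_monomialFamily]
  change matrixRep (monomialFamily (mono 1 0) (mono 0 1) k) *ᵥ Pi.single 0 1 = _
  rw [Pi.basisFun_apply]
  fin_cases k <;> simp only [monomialFamily] <;>
    simp [matrixRep_mono_one_zero, matrixRep_mono_zero_one] <;> decide +kernel

theorem linearIndependent_quotientFamily : LinearIndependent (ZMod 2) quotientFamily := by
  refine LinearIndependent.of_comp coordMap ?_
  rw [show coordMap ∘ quotientFamily = Pi.basisFun (ZMod 2) (Fin 8) from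
    funext coordMap_quotientFamily]
  exact (Pi.basisFun (ZMod 2) (Fin 8)).linearIndependent

theorem span_quotientFamily : Submodule.span (ZMod 2) (Set.range quotientFamily) = ⊤ := by
  let π := Ideal.Quotient.mkₐ (ZMod 2) bbIdeal
  have : Nontrivial (LaurentR ⧸ bbIdeal) :=
    ⟨⟨_, _, linearIndependent_quotientFamily.injective.ne (show (0 : Fin 8) ≠ 1 by decide)⟩⟩
  have : CharP (LaurentR ⧸ bbIdeal) 2 := charP_of_injective_algebraMap' (ZMod 2) 2
  have hxu : π (mono 1 0) * π (mono (-1) 0) = 1 := by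
    rw [← map_mul, mono_mul_mono, ← map_one π]; rfl
  have hyu : π (mono 0 1) * π (mono 0 (-1)) = 1 := by
    rw [← map_mul, mono_mul_mono, ← map_one π]; rfl
  have hf : 1 + π (mono 1 0) + π (mono (-1) 0) * π (mono 0 1) ^ 3 = 0 := by
    rw [← map_pow, mono_pow, ← map_mul, mono_mul_mono, ← map_one π, ← map_add, ← map_add]
    exact Ideal.Quotient.eq_zero_iff_mem.2 (Ideal.subset_span (Or.inl rfl))
  have hg : 1 + π (mono 0 1) + π (mono 1 0) ^ 3 * π (mono 0 (-1)) = 0 := by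
    rw [← map_pow, mono_pow, ← map_mul, mono_mul_mono, ← map_one π, ← map_add, ← map_add]
    exact Ideal.Quotient.eq_zero_iff_mem.2 (Ideal.subset_span (Or.inr rfl))
  have h2 : (2 : LaurentR ⧸ bbIdeal) = 0 := CharTwo.two_eq_zero
  have hx : π (mono 1 0) ^ 3 = π (mono 0 1) + π (mono 0 1) ^ 2 := by
    linear_combination π (mono 0 1) * hg - π (mono 1 0) ^ 3 * hyu
      - (π (mono 0 1) + π (mono 0 1) ^ 2) * h2
  have hy : π (mono 0 1) ^ 3 = π (mono 1 0) + π (mono 1 0) ^ 2 := by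
    linear_combination π (mono 1 0) * hf - π (mono 0 1) ^ 3 * hxu
      - (π (mono 1 0) + π (mono 1 0) ^ 2) * h2
  have hxy := sq_mul_sq_eq (IsUnit.of_mul_eq_one _ hxu) hx hy
  have hX := mul_monomialFamily_left hxy hx hy
  have hY := mul_monomialFamily_right hxy hx hy
  let T := multiplierSubalgebra (Submodule.span (ZMod 2) (Set.range quotientFamily))
  have hT : T.comap π = ⊤ := subalgebra_eq_top_of_mono_mem (mem_multiplierSubalgebra hX)
    (mem_multiplierSubalgebra (mul_family_of_mul_eq_one hX hxu mulX_mul_mulXInv))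
    (mem_multiplierSubalgebra hY)
    (mem_multiplierSubalgebra (mul_family_of_mul_eq_one hY hyu mulY_mul_mulYInv))
  refine eq_top_iff.2 fun q _ => ?_
  obtain ⟨r, rfl⟩ := Ideal.Quotient.mk_surjective q
  have hr : r ∈ T.comap π := hT ▸ Algebra.mem_top
  have h1 := hr 1 (Submodule.subset_span ⟨0, rfl⟩)
  rwa [mul_one] at h1

theorem finrank_quotient_bbIdeal : Module.finrank (ZMod 2) (LaurentR ⧸ bbIdeal) = 8 := by
  rw [Module.finrank_eq_card_basis
    (Module.Basis.mk linearIndependent_quotientFamily span_quotientFamily.ge), Fintype.card_fin]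

/-- For the BB(1̄, 1̄, 3, 3) code, with `f = 1 + x + x⁻¹y³` and `g = 1 + y + y⁻¹x³`, the
topological index is `Q = dim_{F₂} R/(f, g) = 8`; hence `k_max = 2Q = 16` (and the code
supports `2^16` anyon types). -/
theorem bb_1133_topological_index :
    Module.finrank (ZMod 2)
      (LaurentR ⧸ Ideal.span ({1 + mono 1 0 + mono (-1) 3,
        1 + mono 0 1 + mono 3 (-1)} : Set LaurentR)) = 8 ∧
    2 * Module.finrank (ZMod 2)
      (LaurentR ⧸ Ideal.span ({1 + mono 1 0 + mono (-1) 3,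
        1 + mono 0 1 + mono 3 (-1)} : Set LaurentR)) = 16 := by
  exact ⟨finrank_quotient_bbIdeal, by rw [finrank_quotient_bbIdeal]⟩
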